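/- Let T be a finite tree with at least three vertices. If T is a general corona of a tree, then the domination subdivision number of T equals 3, i.e., sd(T) = 3. -/

import Mathlib

open SimpleGraph

namespace GenCorona

universe u

/-- A vertex neighborhood partition of a graph `G`: for every vertex `v`, a partition
of the open neighborhood `N_G(v)` into nonempty sets. -/
structure NbhdPartition {V : Type u} (G : SimpleGraph V) where
  part : V → Set (Set V)
  nonempty : ∀ v : V, ∀ A ∈ part v, A.Nonempty
  subset_nbhd : ∀ v : V, ∀ A ∈ part v, A ⊆ G.neighborSet v
  covers : ∀ v : V, ∀ u ∈ G.neighborSet v, ∃ A ∈ part v, u ∈ A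
  eq_of_inter : ∀ v : V, ∀ A ∈ part v, ∀ B ∈ part v, (A ∩ B).Nonempty → A = B

variable {V : Type u}

/-- The vertex type of the general corona `G ∘ 𝒫`: external vertices `(v,1)` are encoded
as `Sum.inl v`, internal vertices `(v,A)` (with `A ∈ 𝒫(v)`) as `Sum.inr ⟨(v,A), _⟩`. -/
abbrev CoronaVert (G : SimpleGraph V) (P : NbhdPartition G) : Type u :=
  V ⊕ {p : V × Set V // p.2 ∈ P.part p.1}

/-- The general corona `G ∘ 𝒫`. -/
def corona (G : SimpleGraph V) (P : NbhdPartition G) : SimpleGraph (CoronaVert G P) :=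
  SimpleGraph.fromRel fun x y =>
    match x, y with
    | Sum.inl v, Sum.inr p => v = p.val.1
    | Sum.inr p, Sum.inr q =>
        G.Adj p.val.1 q.val.1 ∧ q.val.1 ∈ p.val.2 ∧ p.val.1 ∈ q.val.2
    | _, _ => False

/-- The set of external vertices of the general corona. -/
def Ext (G : SimpleGraph V) (P : NbhdPartition G) : Set (CoronaVert G P) :=
  Set.range Sum.inl

/-- A graph is a general corona of a tree if it is isomorphic to `T ∘ 𝒫` for some finite
tree `T` and some vertex neighborhood partition `𝒫` of `T`. -/
def IsGeneralCoronaOfTree {W : Type*} (H : SimpleGraph W) : Prop :=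
  ∃ (n : ℕ) (T : SimpleGraph (Fin n)) (P : NbhdPartition T),
    T.IsTree ∧ Nonempty (H ≃g corona T P)

/-- A graph `H` is a general corona of a tree with external vertex set `E`. -/
def IsGenCoronaWithExt {W : Type*} (H : SimpleGraph W) (E : Set W) : Prop :=
  ∃ (n : ℕ) (T : SimpleGraph (Fin n)) (P : NbhdPartition T),
    T.IsTree ∧ ∃ f : H ≃g corona T P, E = ⇑f ⁻¹' Ext T P

/-- `D` is a dominating set of `G`. -/
def IsDominating (G : SimpleGraph V) (D : Set V) : Prop :=
  ∀ v ∉ D, ∃ u ∈ D, G.Adj v u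

/-- `S` is a 2-packing of `G`: any two distinct vertices of `S` are at distance
greater than 2 (where the extended distance of unreachable vertices is `⊤`). -/
def Is2Packing (G : SimpleGraph V) (S : Set V) : Prop :=
  ∀ u ∈ S, ∀ v ∈ S, u ≠ v → 2 < G.edist u v

/-- A leaf is a vertex of degree 1, i.e. with exactly one neighbor. -/
def IsLeaf (G : SimpleGraph V) (v : V) : Prop :=
  (G.neighborSet v).ncard = 1

/-- The domination number: the minimum size of a dominating set. -/
noncomputable def dominationNumber (G : SimpleGraph V) : ℕ :=
  sInf {n : ℕ | ∃ D : Set V, IsDominating G D ∧ D.ncard = n}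

/-- The graph obtained from `G` by subdividing every edge in `F` (each once):
for each `e ∈ F` a new vertex `Sum.inr e` replaces the edge `e` by a path of length two. -/
def subdivide (G : SimpleGraph V) (F : Set (Sym2 V)) : SimpleGraph (V ⊕ F) :=
  SimpleGraph.fromRel fun x y =>
    match x, y with
    | Sum.inl u, Sum.inl v => G.Adj u v ∧ s(u, v) ∉ F
    | Sum.inl u, Sum.inr e => u ∈ e.val
    | _, _ => False

/-- The domination subdivision number `sd(G)`: the minimum number of edges which must be
subdivided (each edge at most once) in order to increase the domination number. -/
noncomputable def sd (G : SimpleGraph V) : ℕ :=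
  sInf {k : ℕ | ∃ F : Set (Sym2 V), F ⊆ G.edgeSet ∧ F.ncard = k ∧
    dominationNumber G < dominationNumber (subdivide G F)}

/-- The corona `G ∘ K₁`: attach one new pendant vertex `Sum.inr v` to each vertex
`Sum.inl v` of `G`. -/
def coronaK1 (G : SimpleGraph V) : SimpleGraph (V ⊕ V) :=
  SimpleGraph.fromRel fun x y =>
    match x, y with
    | Sum.inl u, Sum.inl w => G.Adj u w
    | Sum.inl u, Sum.inr w => u = w
    | _, _ => False

/-- The 2-subdivision `S₂(G)`: every edge `uv` is replaced by a path `(u, x₁, x₂, v)`;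
the new vertex `Sum.inr ⟨(u,v), _⟩` is the subdivision vertex adjacent to `u`. -/
def twoSubdivision (G : SimpleGraph V) : SimpleGraph (V ⊕ {p : V × V // G.Adj p.1 p.2}) :=
  SimpleGraph.fromRel fun x y =>
    match x, y with
    | Sum.inl u, Sum.inr p => u = p.val.1
    | Sum.inr p, Sum.inr q => p.val.1 = q.val.2 ∧ p.val.2 = q.val.1
    | _, _ => False

/-- `𝒫'` is a refinement of `𝒫`. -/
def Refines {G : SimpleGraph V} (P' P : NbhdPartition G) : Prop :=
  ∀ v : V, ∀ A ∈ P'.part v, ∃ B ∈ P.part v, A ⊆ B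

/-- The graph obtained by contracting the two vertices `x` and `y` of `G` to the single
vertex `x` (the vertex `y` is removed, and `x` becomes adjacent to all former
neighbors of `y`). -/
def contractPair {W : Type*} (G : SimpleGraph W) (x y : W) :
    SimpleGraph {w : W // w ≠ y} :=
  SimpleGraph.fromRel fun a b =>
    G.Adj a.val b.val ∨ (a.val = x ∧ G.Adj y b.val) ∨ (b.val = x ∧ G.Adj a.val y)

/-- The graph obtained from `G` by attaching a path `(x, y, z)` (encoded as
`Sum.inr 0, Sum.inr 1, Sum.inr 2`) to the vertex `v` via the edge `v x`. -/
def attachPath3 {W : Type*} (G : SimpleGraph W) (v : W) : SimpleGraph (W ⊕ Fin 3) :=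
  SimpleGraph.fromRel fun a b =>
    match a, b with
    | Sum.inl u, Sum.inl w => G.Adj u w
    | Sum.inl u, Sum.inr i => u = v ∧ i = 0
    | Sum.inr i, Sum.inr j => (i = 0 ∧ j = 1) ∨ (i = 1 ∧ j = 2)
    | _, _ => False

/-- The graph obtained from `G` by attaching a path `(x, y)` (encoded as
`Sum.inr 0, Sum.inr 1`) to the vertex `v` via the edge `v x`. -/
def attachPath2 {W : Type*} (G : SimpleGraph W) (v : W) : SimpleGraph (W ⊕ Fin 2) :=
  SimpleGraph.fromRel fun a b =>
    match a, b with
    | Sum.inl u, Sum.inl w => G.Adj u w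
    | Sum.inl u, Sum.inr i => u = v ∧ i = 0
    | Sum.inr i, Sum.inr j => i = 0 ∧ j = 1
    | _, _ => False

/-- The family `𝓕` of labeled trees; the label of a vertex is `A` when it belongs to the
distinguished set `L`, and `B` otherwise.  The family contains the labeled path `P₄`
(leaves labeled `A`, support vertices labeled `B`) and is closed under the two
attachment operations. -/
inductive LabF : ∀ {W : Type}, SimpleGraph W → Set W → Prop where
  | base : LabF (SimpleGraph.pathGraph 4) ({0, 3} : Set (Fin 4))
  | opA {W : Type} {G : SimpleGraph W} {L : Set W} (v : W) :
      LabF G L → v ∈ L →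
        LabF (attachPath3 G v) (Sum.inl '' L ∪ {Sum.inr (2 : Fin 3)})
  | opB {W : Type} {G : SimpleGraph W} {L : Set W} (v : W) :
      LabF G L → v ∉ L →
        LabF (attachPath2 G v) (Sum.inl '' L ∪ {Sum.inr (1 : Fin 2)})

/-- A tree `T` belongs to the family `𝓕` if it admits a labeling constructed by the
above rules, i.e. it is isomorphic to a member of the inductively generated family. -/
def MemF {W : Type*} (T : SimpleGraph W) : Prop :=
  ∃ (W' : Type) (G : SimpleGraph W') (L : Set W'), LabF G L ∧ Nonempty (T ≃g G)

/-!
The external vertices of a general corona form an efficient dominating set `E`, so `γ = |E|`.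
If `bc` is an edge between two internal vertices with external neighbors `a` and `d`, then
subdividing `ab`, `bc`, `cd` puts the middle vertex of `bc` at distance at least `3` from `E`, and
`γ` increases.

Conversely, after deleting at most two edges of a tree, some component `C` of what remains touches
all the deleted edges. Subdivide these edges and move every vertex of `E` outside `C` one step
towards `C`. The resulting set still dominates: an internal vertex `v` whose external neighbor lies
towards `C` has an internal neighbor away from `C`, and the external neighbor of the latter has
moved onto it.
-/

variable {G : SimpleGraph V} {E : Set V} {F : Set (Sym2 V)} {r u v w : V}

/-! ### Domination and packing -/

/-- The closed neighborhood `N_G[v]`, in terms of which both domination and packing are stated. -/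
def closedNbhd (G : SimpleGraph V) (v : V) : Set V :=
  insert v (G.neighborSet v)

@[simp] theorem mem_closedNbhd : w ∈ closedNbhd G v ↔ w = v ∨ G.Adj v w := Iff.rfl

theorem isDominating_iff_forall_mem_closedNbhd {D : Set V} :
    IsDominating G D ↔ ∀ v, ∃ u ∈ D, v ∈ closedNbhd G u := by
  refine forall_congr' fun v => ⟨fun h => ?_, fun ⟨u, hu, hvu⟩ hv => ?_⟩
  · by_cases hv : v ∈ D
    · exact ⟨v, hv, Or.inl rfl⟩
    · obtain ⟨u, hu, hvu⟩ := h hv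
      exact ⟨u, hu, Or.inr hvu.symm⟩
  · exact ⟨u, hu, (hvu.resolve_left fun h => hv (h ▸ hu)).symm⟩

theorem dominationNumber_le_ncard {D : Set V} (hD : IsDominating G D) :
    dominationNumber G ≤ D.ncard :=
  Nat.sInf_le ⟨D, hD, rfl⟩

theorem ncard_le_dominationNumber [Finite V] {S : Set V} (hS : S.PairwiseDisjoint (closedNbhd G)) :
    S.ncard ≤ dominationNumber G := by
  refine le_csInf ⟨_, Set.univ, fun v hv => absurd trivial hv, rfl⟩ ?_
  rintro _ ⟨D, hD, rfl⟩
  choose g hgD hg using isDominating_iff_forall_mem_closedNbhd.1 hD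
  refine Set.ncard_le_ncard_of_injOn g (fun s _ => hgD s) fun s hs t ht hst => ?_
  have mem_closedNbhd_g (x : V) : g x ∈ closedNbhd G x := (hg x).imp Eq.symm Adj.symm
  exact hS.elim_set hs ht (g s) (mem_closedNbhd_g s) (hst ▸ mem_closedNbhd_g t)

/-! ### External vertices of a general corona -/

/-- The properties of the set of external vertices of a general corona that determine its
domination subdivision number: `E` is an efficient dominating set, and every vertex outside `E`
has a neighbor outside `E`. -/
structure IsExternalSet (G : SimpleGraph V) (E : Set V) : Prop where
  isDominating : IsDominating G E
  pairwiseDisjoint : E.PairwiseDisjoint (closedNbhd G)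
  exists_adj_notMem : ∀ v ∉ E, ∃ w ∉ E, G.Adj v w

namespace IsExternalSet

theorem not_adj (hE : IsExternalSet G E) (hu : u ∈ E) (hv : v ∈ E) : ¬ G.Adj u v := fun h =>
  h.ne (hE.pairwiseDisjoint.elim_set hu hv v (Or.inr h) (Or.inl rfl))

theorem eq_of_adj (hE : IsExternalSet G E) (hu : u ∈ E) (hv : v ∈ E) (hwu : G.Adj w u)
    (hwv : G.Adj w v) : u = v :=
  hE.pairwiseDisjoint.elim_set hu hv w (Or.inr hwu.symm) (Or.inr hwv.symm)

theorem dominationNumber_eq [Finite V] (hE : IsExternalSet G E) : dominationNumber G = E.ncard :=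
  (dominationNumber_le_ncard hE.isDominating).antisymm
    (ncard_le_dominationNumber hE.pairwiseDisjoint)

theorem preimage {W : Type*} {H : SimpleGraph W} {E : Set W} (hE : IsExternalSet H E)
    (f : G ≃g H) : IsExternalSet G (f ⁻¹' E) where
  isDominating v hv := by
    obtain ⟨u, hu, hvu⟩ := hE.isDominating (f v) hv
    exact ⟨f.symm u, by simpa using hu, by simpa [← f.map_adj_iff] using hvu⟩
  pairwiseDisjoint := by
    have map_mem {x w : V} (h : w ∈ closedNbhd G x) : f w ∈ closedNbhd H (f x) :=
      h.imp (congrArg f) f.map_adj_iff.2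
    intro u hu v hv huv
    refine Set.disjoint_left.2 fun w hwu hwv => huv (f.injective ?_)
    exact hE.pairwiseDisjoint.elim_set hu hv (f w) (map_mem hwu) (map_mem hwv)
  exists_adj_notMem v hv := by
    obtain ⟨w, hw, hvw⟩ := hE.exists_adj_notMem (f v) hv
    exact ⟨f.symm w, by simpa using hw, by simpa [← f.map_adj_iff] using hvw⟩

end IsExternalSet

section Corona

variable {P : NbhdPartition G}

@[simp] theorem not_corona_adj_inl_inl : ¬ (corona G P).Adj (Sum.inl u) (Sum.inl v) := by
  simp [corona]

@[simp] theorem corona_adj_inl_inr {p : {p : V × Set V // p.2 ∈ P.part p.1}} :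
    (corona G P).Adj (Sum.inl v) (Sum.inr p) ↔ v = p.1.1 := by
  simp [corona]

@[simp] theorem corona_adj_inr_inr {p q : {p : V × Set V // p.2 ∈ P.part p.1}} :
    (corona G P).Adj (Sum.inr p) (Sum.inr q) ↔
      G.Adj p.1.1 q.1.1 ∧ q.1.1 ∈ p.1.2 ∧ p.1.1 ∈ q.1.2 := by
  simp only [corona, fromRel_adj, G.adj_comm q.1.1, and_comm (a := p.1.1 ∈ q.1.2), or_self,
    and_iff_right_iff_imp]
  rintro ⟨h, -⟩ hpq
  exact h.ne (by rw [Sum.inr_injective hpq])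

theorem isExternalSet_ext (P : NbhdPartition G) : IsExternalSet (corona G P) (Ext G P) where
  isDominating := by
    rintro (v | p) hx
    · exact absurd ⟨v, rfl⟩ hx
    · exact ⟨Sum.inl p.1.1, ⟨_, rfl⟩, (corona_adj_inl_inr.2 rfl).symm⟩
  pairwiseDisjoint := by
    rintro _ ⟨u, rfl⟩ _ ⟨v, rfl⟩ huv
    refine Set.disjoint_left.2 ?_
    rintro (w | p) hu hv
    · simp only [mem_closedNbhd, not_corona_adj_inl_inl, or_false] at hu hv
      exact huv (hu.symm.trans hv)
    · simp only [mem_closedNbhd, reduceCtorEq, corona_adj_inl_inr, false_or] at hu hv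
      exact huv (by rw [hu, hv])
  exists_adj_notMem := by
    rintro (v | ⟨⟨v, A⟩, hA⟩) hx
    · exact absurd ⟨v, rfl⟩ hx
    · obtain ⟨w, hw⟩ := P.nonempty v A hA
      have hvw : G.Adj v w := P.subset_nbhd v A hA hw
      obtain ⟨B, hB, hvB⟩ := P.covers w v hvw.symm
      exact ⟨Sum.inr ⟨(w, B), hB⟩, by simp [Ext], corona_adj_inr_inr.2 ⟨hvw, hw, hvB⟩⟩

end Corona

theorem IsGeneralCoronaOfTree.exists_isExternalSet (h : IsGeneralCoronaOfTree G) :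
    ∃ E, IsExternalSet G E :=
  have ⟨_, _, P, _, ⟨f⟩⟩ := h
  ⟨_, (isExternalSet_ext P).preimage f⟩

/-! ### Subdivisions -/

theorem sd_le_ncard (hF : F ⊆ G.edgeSet)
    (hlt : dominationNumber G < dominationNumber (subdivide G F)) : sd G ≤ F.ncard :=
  Nat.sInf_le ⟨F, hF, rfl, hlt⟩

theorem exists_ncard_eq_sd
    (h : ∃ F ⊆ G.edgeSet, dominationNumber G < dominationNumber (subdivide G F)) :
    ∃ F ⊆ G.edgeSet, F.ncard = sd G ∧ dominationNumber G < dominationNumber (subdivide G F) :=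
  have ⟨F, hF, hlt⟩ := h
  Nat.sInf_mem (s := {k | ∃ F ⊆ G.edgeSet, F.ncard = k ∧
    dominationNumber G < dominationNumber (subdivide G F)}) ⟨F.ncard, F, hF, rfl, hlt⟩

@[simp] theorem subdivide_adj_inl_inl :
    (subdivide G F).Adj (Sum.inl u) (Sum.inl v) ↔ G.Adj u v ∧ s(u, v) ∉ F := by
  simp only [subdivide, fromRel_adj, ne_eq, Sum.inl.injEq, Sym2.eq_swap (a := v), G.adj_comm v u,
    or_self, and_iff_right_iff_imp]
  exact fun h => h.1.ne

@[simp] theorem subdivide_adj_inl_inr {e : F} :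
    (subdivide G F).Adj (Sum.inl v) (Sum.inr e) ↔ v ∈ e.1 := by
  simp [subdivide]

@[simp] theorem subdivide_adj_inr_inl {e : F} :
    (subdivide G F).Adj (Sum.inr e) (Sum.inl v) ↔ v ∈ e.1 := by
  rw [adj_comm, subdivide_adj_inl_inr]

@[simp] theorem not_subdivide_adj_inr_inr {e e' : F} :
    ¬ (subdivide G F).Adj (Sum.inr e) (Sum.inr e') := by
  simp [subdivide]

/-! ### Three subdivisions suffice -/

theorem disjoint_closedNbhd_subdivide (hF : F ⊆ G.edgeSet)
    (h : Disjoint (closedNbhd G u) (closedNbhd G v)) :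
    Disjoint (closedNbhd (subdivide G F) (Sum.inl u)) (closedNbhd (subdivide G F) (Sum.inl v)) := by
  rw [Set.disjoint_left] at h ⊢
  rintro (w | e) hu hv
  · simp only [mem_closedNbhd, Sum.inl.injEq, subdivide_adj_inl_inl] at hu hv
    exact h (hu.imp_right And.left) (hv.imp_right And.left)
  · simp only [mem_closedNbhd, reduceCtorEq, subdivide_adj_inl_inr, false_or] at hu hv
    have huv : u ≠ v := fun huv => h (Or.inl rfl) (Or.inl huv)
    have he : e.1 = s(u, v) := (Sym2.mem_and_mem_iff huv).1 ⟨hu, hv⟩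
    have hadj : G.Adj u v := by simpa [he] using hF e.2
    exact h (Or.inr hadj) (Or.inl rfl)

theorem pairwiseDisjoint_closedNbhd_subdivide_insert (hF : F ⊆ G.edgeSet) {S : Set V}
    (hS : S.PairwiseDisjoint (closedNbhd G)) (e : F) (heS : ∀ v ∈ e.1, v ∉ S)
    (heF : ∀ v ∈ e.1, ∀ a ∈ S, G.Adj v a → s(v, a) ∈ F) :
    (insert (Sum.inr e) (Sum.inl '' S)).PairwiseDisjoint (closedNbhd (subdivide G F)) := by
  refine Set.PairwiseDisjoint.insert ?_ ?_
  · rintro _ ⟨u, hu, rfl⟩ _ ⟨v, hv, rfl⟩ huv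
    exact disjoint_closedNbhd_subdivide hF (hS hu hv fun h => huv (congrArg _ h))
  · rintro _ ⟨a, ha, rfl⟩ -
    refine Set.disjoint_left.2 ?_
    rintro (v | e') he ha'
    · simp only [mem_closedNbhd, reduceCtorEq, Sum.inl.injEq, subdivide_adj_inr_inl, false_or,
        subdivide_adj_inl_inl] at he ha'
      rcases ha' with rfl | ⟨hav, hav'⟩
      · exact heS _ he ha
      · exact hav' (Sym2.eq_swap ▸ heF v he a ha hav.symm)
    · simp only [mem_closedNbhd, Sum.inr.injEq, not_subdivide_adj_inr_inr, or_false, reduceCtorEq,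
        subdivide_adj_inl_inr, false_or] at he ha'
      exact heS a (he ▸ ha') ha

theorem IsExternalSet.exists_dominationNumber_lt_subdivide [Finite V] (hE : IsExternalSet G E)
    (hne : E ≠ Set.univ) :
    ∃ F ⊆ G.edgeSet, F.ncard ≤ 3 ∧ dominationNumber G < dominationNumber (subdivide G F) := by
  obtain ⟨b, hb⟩ := (Set.ne_univ_iff_exists_notMem E).1 hne
  obtain ⟨c, hc, hbc⟩ := hE.exists_adj_notMem b hb
  obtain ⟨a, ha, hba⟩ := hE.isDominating b hb
  obtain ⟨d, hd, hcd⟩ := hE.isDominating c hc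
  let F : Set (Sym2 V) := {s(b, c), s(b, a), s(c, d)}
  have hF : F ⊆ G.edgeSet := by
    rintro _ (rfl | rfl | rfl)
    exacts [hbc, hba, hcd]
  have hcard : F.ncard ≤ 3 :=
    calc F.ncard ≤ ({s(b, a), s(c, d)} : Set (Sym2 V)).ncard + 1 := Set.ncard_insert_le _ _
      _ ≤ 3 := by grw [Set.ncard_insert_le, Set.ncard_singleton]
  refine ⟨F, hF, hcard, ?_⟩
  let e : F := ⟨s(b, c), by simp [F]⟩
  have hpack := pairwiseDisjoint_closedNbhd_subdivide_insert hF hE.pairwiseDisjoint e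
    (by simp [e, hb, hc]) (by
      intro v hv x hx hvx
      rcases Sym2.mem_iff.1 hv with rfl | rfl
      · simp [F, hE.eq_of_adj hx ha hvx hba]
      · simp [F, hE.eq_of_adj hx hd hvx hcd])
  calc dominationNumber G = (Sum.inl '' E : Set (V ⊕ F)).ncard := by
        rw [hE.dominationNumber_eq, Set.ncard_image_of_injective E Sum.inl_injective]
    _ < (insert (Sum.inr e) (Sum.inl '' E)).ncard := by
        rw [Set.ncard_insert_of_notMem (by simp)]
        exact Nat.lt_succ_self _
    _ ≤ dominationNumber (subdivide G F) := ncard_le_dominationNumber hpack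

/-! ### Rooted trees and the component of the root -/

/-- The neighbor of `v` towards the root `r` of a tree; the parent of `r` is `r` itself. -/
noncomputable def parent (hG : G.IsTree) (r v : V) : V :=
  (hG.existsUnique_path v r).choose.snd

theorem parent_eq_snd (hG : G.IsTree) {q : G.Walk v r} (hq : q.IsPath) :
    parent hG r v = q.snd := by
  rw [parent, (hG.existsUnique_path v r).unique (hG.existsUnique_path v r).choose_spec.1 hq]

theorem parent_root (hG : G.IsTree) : parent hG r r = r :=
  parent_eq_snd hG Walk.IsPath.nil

theorem adj_parent (hG : G.IsTree) (hv : v ≠ r) : G.Adj v (parent hG r v) :=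
  Walk.adj_snd fun h => hv h.eq

theorem parent_eq_or_parent_eq (hG : G.IsTree) (r : V) (h : G.Adj u v) :
    parent hG r u = v ∨ parent hG r v = u := by
  obtain ⟨q, hq, -⟩ := hG.existsUnique_path u r
  by_cases hv : v ∈ q.support
  · left
    rw [parent_eq_snd hG hq, hG.isAcyclic.eq_snd_of_adj_start hq h hv]
  · right
    rw [parent_eq_snd hG (hq.cons (h := h.symm) hv), Walk.snd_cons]

theorem reachable_parent (hG : G.IsTree) {H : SimpleGraph V} (hH : H ≤ G) (h : H.Reachable v r) :
    H.Reachable (parent hG r v) r := by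
  obtain ⟨q, hq⟩ := h.exists_isPath
  rw [parent_eq_snd hG (hq.mapLe hH)]
  simpa using q.tail.reachable

/-- The vertex set of the component of `r` in `G - F`, which stays fixed when a dominating set is
moved towards the root. -/
def core (G : SimpleGraph V) (F : Set (Sym2 V)) (r : V) : Set V :=
  {v | (G.deleteEdges F).Reachable v r}

theorem parent_mem_core (hG : G.IsTree) (hv : v ∈ core G F r) : parent hG r v ∈ core G F r :=
  reachable_parent hG (deleteEdges_le F) hv

theorem ne_root_of_notMem_core (hv : v ∉ core G F r) : v ≠ r := by
  rintro rfl
  exact hv .rfl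

theorem mk_notMem_of_mem_core (hG : G.IsAcyclic) (h : G.Adj u v) (hu : u ∈ core G F r)
    (hv : v ∈ core G F r) : s(u, v) ∉ F := fun he =>
  isBridge_iff.1 (isAcyclic_iff_forall_adj_isBridge.1 hG h)
    ((hu.trans hv.symm).mono (deleteEdges_anti (Set.singleton_subset_iff.2 he)))

/-- The component of `r` in `G - F` touches every edge of `F`. In a tree rooted at such an `r`, all
edges of `F` lead from this component to the children of its vertices. -/
def IsCentral (G : SimpleGraph V) (F : Set (Sym2 V)) (r : V) : Prop :=
  ∀ e ∈ F, ∃ v ∈ e, v ∈ core G F r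

theorem IsCentral.mk_notMem (hr : IsCentral G F r) (hu : u ∉ core G F r) (hv : v ∉ core G F r) :
    s(u, v) ∉ F := fun he => by
  obtain ⟨x, hx, hxr⟩ := hr _ he
  rcases Sym2.mem_iff.1 hx with rfl | rfl
  exacts [hu hxr, hv hxr]

theorem IsCentral.exists_eq_mk_parent (hr : IsCentral G F r) (hG : G.IsTree) (hF : F ⊆ G.edgeSet)
    {e : Sym2 V} (he : e ∈ F) :
    ∃ v ∉ core G F r, parent hG r v ∈ core G F r ∧ e = s(v, parent hG r v) := by
  obtain ⟨u, ⟨v, rfl⟩, hu⟩ := hr e he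
  have huv : G.Adj u v := hF he
  have hv : v ∉ core G F r := fun hv => mk_notMem_of_mem_core hG.isAcyclic huv hu hv he
  have hvu : parent hG r v = u :=
    (parent_eq_or_parent_eq hG r huv).resolve_left fun h => hv (h ▸ parent_mem_core hG hu)
  exact ⟨v, hv, by rwa [hvu], by rw [hvu, Sym2.eq_swap]⟩

theorem exists_subset_pair_of_ncard_le_two {α : Type*} [Nonempty α] {s : Set α} (hfin : s.Finite)
    (hs : s.ncard ≤ 2) : ∃ a b, s ⊆ {a, b} := by
  rcases s.eq_empty_or_nonempty with rfl | ⟨a, ha⟩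
  · exact ⟨Classical.arbitrary α, Classical.arbitrary α, Set.empty_subset _⟩
  · have hdiff : (s \ {a}).ncard ≤ 1 := by
      rw [Set.ncard_sdiff_singleton_of_mem ha]
      exact Nat.sub_le_of_le_add hs
    obtain ⟨b, hb⟩ := (Set.ncard_le_one_iff_subset_singleton (hs := hfin.sdiff)).1 hdiff
    exact ⟨a, b, Set.sdiff_singleton_subset_iff.1 hb⟩

theorem exists_isCentral_of_ncard_le_two (hG : G.Connected) (hfin : F.Finite)
    (hF : F.ncard ≤ 2) : ∃ r, IsCentral G F r := by
  have := hG.nonempty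
  have : Nonempty (Sym2 V) := ⟨s(Classical.arbitrary V, Classical.arbitrary V)⟩
  obtain ⟨e₁, e₂, hsub⟩ := exists_subset_pair_of_ncard_le_two hfin hF
  obtain ⟨u, hu⟩ : ∃ u, u ∈ e₁ := ⟨_, e₁.out_fst_mem⟩
  obtain ⟨w, hw⟩ : ∃ w, w ∈ e₂ := ⟨_, e₂.out_fst_mem⟩
  suffices h : ∃ r ∈ e₂, ∃ x ∈ e₁, x ∈ core G F r by
    obtain ⟨r, hr, x, hx, hxr⟩ := h
    refine ⟨r, fun e he => ?_⟩
    rcases hsub he with rfl | rfl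
    exacts [⟨x, hx, hxr⟩, ⟨r, hr, .rfl⟩]
  let S : Set V := {y | ∃ x ∈ e₁, (G.deleteEdges F).Reachable x y}
  by_cases hwS : w ∈ S
  · exact ⟨w, hw, hwS⟩
  · obtain ⟨q⟩ := hG.preconnected u w
    obtain ⟨⟨⟨y, z⟩, hyz⟩, -, hy, hz⟩ := q.exists_boundary_dart S ⟨u, hu, .rfl⟩ hwS
    have hyzF : s(y, z) ∈ F := by
      by_contra hyzF
      obtain ⟨x, hx, hxy⟩ := hy
      exact hz ⟨x, hx, hxy.trans (Adj.reachable (deleteEdges_adj.2 ⟨hyz, hyzF⟩))⟩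
    rcases hsub hyzF with rfl | rfl
    · exact absurd ⟨z, Sym2.mem_mk_right y z, .rfl⟩ hz
    · exact ⟨y, Sym2.mem_mk_left y z, hy⟩

/-! ### Two subdivisions do not suffice -/

open Classical in
/-- The vertex of the subdivision of `G` along `F` obtained from `v` by moving one step towards the
component of `r` in `G - F`, or not at all if `v` already lies there. -/
noncomputable def shift (hG : G.IsTree) (F : Set (Sym2 V)) (r v : V) : V ⊕ F :=
  if v ∈ core G F r then Sum.inl v
  else if h : s(v, parent hG r v) ∈ F then Sum.inr ⟨_, h⟩
  else Sum.inl (parent hG r v)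

theorem shift_of_mem_core (hG : G.IsTree) (hv : v ∈ core G F r) : shift hG F r v = Sum.inl v :=
  if_pos hv

theorem shift_of_mk_parent_mem (hG : G.IsTree) (hv : v ∉ core G F r)
    (h : s(v, parent hG r v) ∈ F) : shift hG F r v = Sum.inr ⟨_, h⟩ := by
  rw [shift, if_neg hv, dif_pos h]

theorem shift_of_mk_parent_notMem (hG : G.IsTree) (hv : v ∉ core G F r)
    (h : s(v, parent hG r v) ∉ F) : shift hG F r v = Sum.inl (parent hG r v) := by
  rw [shift, if_neg hv, dif_neg h]

theorem IsCentral.shift_eq_inl_parent (hr : IsCentral G F r) (hG : G.IsTree)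
    (hv : parent hG r v ∉ core G F r) : shift hG F r v = Sum.inl (parent hG r v) :=
  have hv' : v ∉ core G F r := mt (parent_mem_core hG) hv
  shift_of_mk_parent_notMem hG hv' (hr.mk_notMem hv' hv)

theorem inl_mem_closedNbhd_shift (hG : G.IsTree) (F : Set (Sym2 V)) (r v : V) :
    Sum.inl v ∈ closedNbhd (subdivide G F) (shift hG F r v) := by
  by_cases hv : v ∈ core G F r
  · simp [shift_of_mem_core hG hv]
  have hadj := adj_parent hG (ne_root_of_notMem_core hv)
  by_cases h : s(v, parent hG r v) ∈ F
  · simp [shift_of_mk_parent_mem hG hv h]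
  · rw [shift_of_mk_parent_notMem hG hv h]
    exact Or.inr (subdivide_adj_inl_inl.2 ⟨hadj, h⟩).symm

theorem inl_parent_mem_closedNbhd_shift (hG : G.IsTree) (F : Set (Sym2 V)) (r v : V) :
    Sum.inl (parent hG r v) ∈ closedNbhd (subdivide G F) (shift hG F r v) := by
  by_cases hv : v ∈ core G F r
  · rw [shift_of_mem_core hG hv]
    by_cases hvr : v = r
    · left
      rw [hvr, parent_root hG]
    · have hadj := adj_parent hG hvr
      exact Or.inr (subdivide_adj_inl_inl.2
        ⟨hadj, mk_notMem_of_mem_core hG.isAcyclic hadj hv (parent_mem_core hG hv)⟩)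
  by_cases h : s(v, parent hG r v) ∈ F
  · simp [shift_of_mk_parent_mem hG hv h]
  · simp [shift_of_mk_parent_notMem hG hv h]

theorem inl_mem_closedNbhd_shift_of_mem_core (hG : G.IsTree) (hv : v ∈ core G F r)
    (h : G.Adj v w) : Sum.inl v ∈ closedNbhd (subdivide G F) (shift hG F r w) := by
  rcases parent_eq_or_parent_eq hG r h with rfl | rfl
  · have hw := parent_mem_core hG hv
    rw [shift_of_mem_core hG hw]
    exact Or.inr (subdivide_adj_inl_inl.2
      ⟨h.symm, mk_notMem_of_mem_core hG.isAcyclic h.symm hw hv⟩)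
  · exact inl_parent_mem_closedNbhd_shift hG F r w

namespace IsExternalSet

theorem exists_inl_mem_closedNbhd_shift (hE : IsExternalSet G E) (hG : G.IsTree)
    (hr : IsCentral G F r) (v : V) :
    ∃ a ∈ E, Sum.inl v ∈ closedNbhd (subdivide G F) (shift hG F r a) := by
  by_cases hvE : v ∈ E
  · exact ⟨v, hvE, inl_mem_closedNbhd_shift hG F r v⟩
  obtain ⟨a, ha, hva⟩ := hE.isDominating v hvE
  by_cases hv : v ∈ core G F r
  · exact ⟨a, ha, inl_mem_closedNbhd_shift_of_mem_core hG hv hva⟩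
  rcases parent_eq_or_parent_eq hG r hva with hpv | rfl
  · obtain ⟨w, hwE, hvw⟩ := hE.exists_adj_notMem v hvE
    obtain ⟨b, hb, hwb⟩ := hE.isDominating w hwE
    have hpw : parent hG r w = v := (parent_eq_or_parent_eq hG r hvw).resolve_left fun h =>
      hwE (h ▸ hpv ▸ ha)
    have hpb : parent hG r b = w := (parent_eq_or_parent_eq hG r hwb).resolve_left fun h =>
      hvE (hpw ▸ h ▸ hb)
    have hw : w ∉ core G F r := fun hw => hv (hpw ▸ parent_mem_core hG hw)
    refine ⟨b, hb, ?_⟩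
    rw [hr.shift_eq_inl_parent hG (hpb ▸ hw), hpb]
    exact Or.inr (subdivide_adj_inl_inl.2 ⟨hvw.symm, hr.mk_notMem hw hv⟩)
  · exact ⟨a, ha, inl_parent_mem_closedNbhd_shift hG F r a⟩

theorem exists_inr_mem_closedNbhd_shift (hE : IsExternalSet G E) (hG : G.IsTree)
    (hF : F ⊆ G.edgeSet) (hr : IsCentral G F r) (e : F) :
    ∃ a ∈ E, Sum.inr e ∈ closedNbhd (subdivide G F) (shift hG F r a) := by
  obtain ⟨e, he⟩ := e
  obtain ⟨v, hv, hpv, rfl⟩ := hr.exists_eq_mk_parent hG hF he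
  by_cases hvE : v ∈ E
  · exact ⟨v, hvE, Or.inl (shift_of_mk_parent_mem hG hv he).symm⟩
  by_cases hpE : parent hG r v ∈ E
  · exact ⟨_, hpE, by simp [shift_of_mem_core hG hpv]⟩
  obtain ⟨a, ha, hva⟩ := hE.isDominating v hvE
  have hpa : parent hG r a = v := (parent_eq_or_parent_eq hG r hva).resolve_left fun h =>
    hpE (h ▸ ha)
  have hpa' : parent hG r a ∉ core G F r := by rwa [hpa]
  exact ⟨a, ha, by simp [hr.shift_eq_inl_parent hG hpa', hpa]⟩

theorem isDominating_shift_image (hE : IsExternalSet G E) (hG : G.IsTree) (hF : F ⊆ G.edgeSet)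
    (hr : IsCentral G F r) : IsDominating (subdivide G F) (shift hG F r '' E) := by
  rw [isDominating_iff_forall_mem_closedNbhd]
  rintro (v | e)
  · simpa using hE.exists_inl_mem_closedNbhd_shift hG hr v
  · simpa using hE.exists_inr_mem_closedNbhd_shift hG hF hr e

theorem dominationNumber_subdivide_le [Finite V] (hE : IsExternalSet G E) (hG : G.IsTree)
    (hF : F ⊆ G.edgeSet) (hcard : F.ncard ≤ 2) :
    dominationNumber (subdivide G F) ≤ dominationNumber G := by
  obtain ⟨r, hr⟩ := exists_isCentral_of_ncard_le_two hG.connected F.toFinite hcard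
  calc dominationNumber (subdivide G F) ≤ (shift hG F r '' E).ncard :=
        dominationNumber_le_ncard (hE.isDominating_shift_image hG hF hr)
    _ ≤ E.ncard := Set.ncard_image_le E.toFinite
    _ = dominationNumber G := hE.dominationNumber_eq.symm

theorem ne_univ [Nontrivial V] (hE : IsExternalSet G E) (hG : G.Connected) : E ≠ Set.univ := by
  rintro rfl
  obtain ⟨v⟩ := hG.nonempty
  obtain ⟨w, hvw⟩ := hG.preconnected.exists_adj_of_nontrivial v
  exact hE.not_adj trivial trivial hvw

end IsExternalSet

/-- If a finite tree `T` with at least three vertices is a general corona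
of a tree, then its domination subdivision number equals 3. -/
theorem sd_eq_three_of_isGeneralCorona {V : Type u} [Fintype V]
    (T : SimpleGraph V) (hT : T.IsTree) (h3 : 3 ≤ Fintype.card V)
    (h : IsGeneralCoronaOfTree T) : sd T = 3 := by
  obtain ⟨E, hE⟩ := h.exists_isExternalSet
  have : Nontrivial V := Fintype.one_lt_card_iff_nontrivial.1 (by omega)
  obtain ⟨F, hF, hcard, hlt⟩ := hE.exists_dominationNumber_lt_subdivide (hE.ne_univ hT.connected)
  refine le_antisymm ((sd_le_ncard hF hlt).trans hcard) ?_
  obtain ⟨F', hF', hcard', hlt'⟩ := exists_ncard_eq_sd ⟨F, hF, hlt⟩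
  by_contra! hsd
  have hF'_le : F'.ncard ≤ 2 := by omega
  exact hlt'.not_ge (hE.dominationNumber_subdivide_le hT hF' hF'_le)

end GenCorona
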